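/- Let n ≥ 1, 1/2 < s < 1, μ > 0. Let g : ℝⁿ × ℝ → ℝ satisfy |g(x,t) − g(y,t)| ≤ Lip(g)·|x−y| for all x, y ∈ ℝⁿ uniformly in t ∈ ℝ, and g(x,t₁) − g(x,t₂) ≥ μ(t₁ − t₂) for all x and all t₁ ≥ t₂. Let φ : ℝⁿ → ℝ be Lipschitz continuous with constant Lip(φ). Let v : ℝⁿ → ℝ be continuous, suppose for every x ∈ ℝⁿ and every admissible A the function y ↦ δ(v,x,y)/|A⁻¹y|^{n+2s} is Lebesgue integrable on ℝⁿ, suppose inf_A L_A v(x) = g(x, v(x)) for every x, and suppose (v − φ)(x) → 0 as |x| → ∞. Then for all x, y ∈ ℝⁿ, |v(x) − v(y)| ≤ max{ Lip(g)/μ, Lip(φ) }·|x − y|. -/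

import Mathlib

open MeasureTheory

noncomputable def surfOmega (k : ℕ) : ℝ := 2 * Real.pi ^ ((k : ℝ) / 2) / Real.Gamma ((k : ℝ) / 2)

noncomputable def mu1 (s L C : ℝ) : ℝ := L ^ (2 - 2 * s) * (C / 2) ^ (2 * s - 1) / (2 * s - 1)

noncomputable def C1 (n : ℕ) (s L C : ℝ) : ℝ :=
  (Real.sqrt Real.pi * Real.Gamma (((n : ℝ) - 1) / 2 + s) / Real.Gamma ((n : ℝ) / 2 + s)) *
    (mu1 s L C * surfOmega (n - 1) / 2)

noncomputable def C2 (n : ℕ) (s : ℝ) : ℝ :=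
  surfOmega (n - 1) * Real.Gamma (((n : ℝ) - 1) / 2) * Real.Gamma (s + 1 / 2) /
    (2 * Real.Gamma ((n : ℝ) / 2 + s))

noncomputable def mu0 (n : ℕ) (s L C η₀ : ℝ) : ℝ :=
  C1 n s L C ^ (1 - (n : ℝ)) * (C2 n s)⁻¹ * (η₀ / 2) ^ (n : ℝ)

/-- Second-order increment `δ(u,x,y) = u(x+y) + u(x-y) - 2u(x)`. -/
noncomputable def delta2 {n : ℕ} (u : EuclideanSpace ℝ (Fin n) → ℝ)
    (x y : EuclideanSpace ℝ (Fin n)) : ℝ :=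
  u (x + y) + u (x - y) - 2 * u x

/-- Integrand `δ(u,x,y)/|A⁻¹ y|^(n+2s)`. -/
noncomputable def kernelA {n : ℕ} (s : ℝ) (A : Matrix (Fin n) (Fin n) ℝ)
    (u : EuclideanSpace ℝ (Fin n) → ℝ) (x y : EuclideanSpace ℝ (Fin n)) : ℝ :=
  delta2 u x y /
    ‖(EuclideanSpace.equiv (Fin n) ℝ).symm (A⁻¹.mulVec (EuclideanSpace.equiv (Fin n) ℝ y))‖ ^
      ((n : ℝ) + 2 * s)

/-- The linear operator `L_A u(x) = (1/2) ∫ δ(u,x,y)/|A⁻¹ y|^(n+2s) dy`. -/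
noncomputable def LA {n : ℕ} (s : ℝ) (A : Matrix (Fin n) (Fin n) ℝ)
    (u : EuclideanSpace ℝ (Fin n) → ℝ) (x : EuclideanSpace ℝ (Fin n)) : ℝ :=
  (1 / 2) * ∫ y, kernelA s A u x y


open Filter

/-!
If `|v x - v y| ≤ M * |x - y|` fails for some `M > max (Lip g / μ) (Lip φ)`, then
`v x - v y - M * |x - y|` attains a positive maximum, since `v - φ` vanishes at infinity and
`M > Lip φ`. Translating both points of the maximizer by `±z` gives `δ(v, x, z) ≤ δ(v, y, z)` for
all `z`, so `L_A v(x) ≤ L_A v(y)` for every `A` and `g(x, v x) ≤ g(y, v y)`; strict monotonicity of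
`g` in `t` and its Lipschitz bound in `x` then force `v x - v y ≤ (Lip g / μ) * |x - y|`, a
contradiction.

Comparing infima is delicate because the infimum of a set of reals that is unbounded below is `0`
by convention. For `n ≤ 1` the only admissible matrix is `1`. For `n ≥ 2` one needs: if
`{L_A v(x)}` is bounded below, all its members are nonnegative. Replace `|A⁻¹ y| ^ 2` by the form
`(1 + |w| ^ 2) * |z| ^ 2 - ⟪w, z⟫ ^ 2` at `z = A⁻¹ y`, which is `(1 + |w| ^ 2) ^ ((n - 1) / n)`
times `|B⁻¹ y| ^ 2` for an admissible `B`. Integrating over `w` in the annulus `r ≤ |w| ≤ 2 * r`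
multiplies the kernel by a factor that, by rotation invariance, does not depend on `y` and is at
least of order `r`, whereas the lower bound `-C` on the `L_B v(x)` only costs
`C * r ^ n * r ^ (-(n - 1) * (n + 2 * s) / n)`. Hence a negative `L_A v(x)` would be at least
`-C' * r ^ (-2 * s * (n - 1) / n)`, which tends to `0` as `r → ∞`.
-/

section Doubling

variable {E : Type*} [NormedAddCommGroup E] [ProperSpace E] {v φ : E → ℝ} {L M : ℝ}

theorem eventually_doubling_le (hLM : L < M) (hv : Continuous v)
    (hφ : ∀ x y, φ x - φ y ≤ L * ‖x - y‖)
    (hlim : Tendsto (fun x => v x - φ x) (cocompact E) (nhds 0)) {θ : ℝ} (hθ : 0 < θ) :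
    ∀ᶠ q : E × E in cocompact (E × E), v q.1 - v q.2 - M * ‖q.1 - q.2‖ ≤ θ := by
  have hφ_cont : Continuous φ :=
    (LipschitzWith.of_le_add_mul' L fun x y => by
      rw [dist_eq_norm]; linarith [hφ x y]).continuous
  let w : ZeroAtInftyContinuousMap E ℝ := ⟨⟨fun x => v x - φ x, hv.sub hφ_cont⟩, hlim⟩
  obtain ⟨C, hC⟩ := ZeroAtInftyContinuousMap.bounded w
  have hosc (x y : E) : (v x - φ x) - (v y - φ y) ≤ C := (le_abs_self _).trans (hC x y)
  have hfar : ∀ᶠ x in Bornology.cobounded E, |v x - φ x| < θ / 2 := by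
    rw [Metric.cobounded_eq_cocompact]
    simpa using hlim.abs.eventually_lt_const (by simpa using half_pos hθ)
  obtain ⟨R, -, hR⟩ := hasBasis_cobounded_norm.eventually_iff.1 hfar
  rw [← Metric.cobounded_eq_cocompact]
  refine hasBasis_cobounded_norm.eventually_iff.2 ⟨R + C / (M - L), trivial, ?_⟩
  rintro ⟨x, y⟩ (hxy : R + C / (M - L) ≤ max ‖x‖ ‖y‖)
  have hdiff : v x - v y - M * ‖x - y‖ ≤ (v x - φ x) - (v y - φ y) - (M - L) * ‖x - y‖ := by
    linarith [hφ x y]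
  by_cases hboth : R ≤ ‖x‖ ∧ R ≤ ‖y‖
  · have hx := abs_lt.1 (hR hboth.1)
    have hy := abs_lt.1 (hR hboth.2)
    have hdist : 0 ≤ (M - L) * ‖x - y‖ := mul_nonneg (by linarith) (norm_nonneg _)
    exact hdiff.trans (by linarith)
  · have hdist : C / (M - L) ≤ ‖x - y‖ := by
      have hnorm := abs_le.1 (abs_norm_sub_norm_le x y)
      rcases le_max_iff.1 hxy with h | h <;> rcases not_and_or.1 hboth with h' | h' <;> linarith
    have hC_le : C ≤ (M - L) * ‖x - y‖ := (div_le_iff₀' (sub_pos.2 hLM)).1 hdist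
    exact hdiff.trans (by linarith [hosc x y])

theorem exists_forall_doubling_le (hLM : L < M) (hv : Continuous v)
    (hφ : ∀ x y, φ x - φ y ≤ L * ‖x - y‖)
    (hlim : Tendsto (fun x => v x - φ x) (cocompact E) (nhds 0))
    {a b : E} (hab : 0 < v a - v b - M * ‖a - b‖) :
    ∃ x y, ∀ x' y', v x' - v y' - M * ‖x' - y'‖ ≤ v x - v y - M * ‖x - y‖ := by
  have hcont : Continuous fun q : E × E => v q.1 - v q.2 - M * ‖q.1 - q.2‖ := by fun_prop
  obtain ⟨q, hq⟩ := hcont.exists_forall_ge' (a, b) (eventually_doubling_le hLM hv hφ hlim hab)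
  exact ⟨q.1, q.2, fun x' y' => hq (x', y')⟩

variable {g : E × ℝ → ℝ} {μ K : ℝ} (hμ : 0 < μ)
  (hg_lip : ∀ x y t, g (x, t) - g (y, t) ≤ K * ‖x - y‖)
  (hg_mono : ∀ x t₁ t₂, t₂ ≤ t₁ → μ * (t₁ - t₂) ≤ g (x, t₁) - g (x, t₂))
  (hcomp : ∀ x y, (∀ z, v (x + z) + v (x - z) - 2 * v x ≤ v (y + z) + v (y - z) - 2 * v y) →
    g (x, v x) ≤ g (y, v y))
  (hv : Continuous v) (hφ : ∀ x y, φ x - φ y ≤ L * ‖x - y‖)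
  (hlim : Tendsto (fun x => v x - φ x) (cocompact E) (nhds 0))

include hμ hg_lip hg_mono hcomp hv hφ hlim

theorem sub_le_mul_norm_of_comparison (hKM : K / μ < M) (hLM : L < M) (a b : E) :
    v a - v b ≤ M * ‖a - b‖ := by
  by_contra! hab
  obtain ⟨x, y, hmax⟩ := exists_forall_doubling_le hLM hv hφ hlim (sub_pos.2 hab)
  have hpos : M * ‖x - y‖ < v x - v y := by linarith [hmax a b]
  have hM_nonneg : 0 ≤ M * ‖x - y‖ := by
    have hL_nonneg : 0 ≤ L * ‖x - y‖ := by
      have hyx := hφ y x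
      rw [norm_sub_rev] at hyx
      linarith [hφ x y]
    exact hL_nonneg.trans (by gcongr)
  have hδ (z : E) : v (x + z) + v (x - z) - 2 * v x ≤ v (y + z) + v (y - z) - 2 * v y := by
    have hadd := hmax (x + z) (y + z)
    have hsub := hmax (x - z) (y - z)
    rw [add_sub_add_right_eq_sub] at hadd
    rw [sub_sub_sub_cancel_right] at hsub
    linarith
  have hK : K * ‖x - y‖ ≤ μ * (M * ‖x - y‖) := by
    rw [← mul_assoc]
    exact mul_le_mul_of_nonneg_right ((div_le_iff₀' hμ).1 hKM.le) (norm_nonneg _)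
  have hgap : μ * (v x - v y) ≤ μ * (M * ‖x - y‖) :=
    calc μ * (v x - v y) ≤ g (x, v x) - g (x, v y) := hg_mono x _ _ (by linarith)
      _ ≤ g (y, v y) - g (x, v y) := by gcongr; exact hcomp x y hδ
      _ ≤ K * ‖x - y‖ := norm_sub_rev x y ▸ hg_lip y x (v y)
      _ ≤ μ * (M * ‖x - y‖) := hK
  exact hpos.not_ge (le_of_mul_le_mul_left hgap hμ)

theorem abs_sub_le_max_mul_norm_of_comparison (x y : E) :
    |v x - v y| ≤ max (K / μ) L * ‖x - y‖ := by
  have honesided (a b : E) : v a - v b ≤ max (K / μ) L * ‖a - b‖ := by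
    rcases eq_or_ne a b with rfl | hab
    · simp
    rw [← div_le_iff₀ (norm_sub_pos_iff.2 hab)]
    refine le_of_forall_gt_imp_ge_of_dense fun M hM => ?_
    rw [div_le_iff₀ (norm_sub_pos_iff.2 hab)]
    exact sub_le_mul_norm_of_comparison hμ hg_lip hg_mono hcomp hv hφ hlim
      ((le_max_left _ _).trans_lt hM) ((le_max_right _ _).trans_lt hM) a b
  exact abs_sub_le_iff.2 ⟨honesided x y, norm_sub_rev x y ▸ honesided y x⟩

end Doubling

section ElongatedForm

variable {E : Type*} [NormedAddCommGroup E] [InnerProductSpace ℝ E]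

/-- The quadratic form in `z` that equals `‖z‖ ^ 2` along `w` and `(1 + ‖w‖ ^ 2) * ‖z‖ ^ 2` on `wᗮ`;
its sublevel sets are ellipsoids of revolution elongated in the direction `w`. -/
noncomputable def elongatedForm (w z : E) : ℝ :=
  (1 + ‖w‖ ^ 2) * ‖z‖ ^ 2 - inner ℝ w z ^ 2

theorem norm_sq_le_elongatedForm (w z : E) : ‖z‖ ^ 2 ≤ elongatedForm w z := by
  have hcs : inner ℝ w z ^ 2 ≤ ‖w‖ ^ 2 * ‖z‖ ^ 2 := by
    rw [← mul_pow, ← sq_abs]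
    gcongr
    exact abs_real_inner_le_norm w z
  unfold elongatedForm
  linarith

theorem elongatedForm_pos (w : E) {z : E} (hz : z ≠ 0) : 0 < elongatedForm w z :=
  (pow_pos (norm_pos_iff.2 hz) 2).trans_le (norm_sq_le_elongatedForm w z)

theorem elongatedForm_smul (w z : E) (c : ℝ) :
    elongatedForm w (c • z) = c ^ 2 * elongatedForm w z := by
  simp only [elongatedForm, norm_smul, real_inner_smul_right, mul_pow, Real.norm_eq_abs, sq_abs]
  ring

theorem elongatedForm_map (T : E ≃ₗᵢ[ℝ] E) (w z : E) :
    elongatedForm (T w) (T z) = elongatedForm w z := by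
  simp only [elongatedForm, LinearIsometryEquiv.norm_map, LinearIsometryEquiv.inner_map_map]

/-- The factor by which the kernel `‖z‖ ^ (-p)` is damped when `‖z‖ ^ 2` is replaced by
`elongatedForm w z`. For `z ≠ 0` it depends on `z` only through its direction. -/
noncomputable def elongationWeight (p : ℝ) (w z : E) : ℝ :=
  (‖z‖ ^ 2 / elongatedForm w z) ^ (p / 2)

theorem elongationWeight_nonneg (p : ℝ) (w z : E) : 0 ≤ elongationWeight p w z :=
  Real.rpow_nonneg (div_nonneg (sq_nonneg _) ((sq_nonneg _).trans (norm_sq_le_elongatedForm w z))) _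

theorem elongationWeight_le_one {p : ℝ} (hp : 0 ≤ p) (w z : E) : elongationWeight p w z ≤ 1 := by
  have hform : 0 ≤ elongatedForm w z := (sq_nonneg _).trans (norm_sq_le_elongatedForm w z)
  exact Real.rpow_le_one (by positivity) (div_le_one_of_le₀ (norm_sq_le_elongatedForm w z) hform)
    (by positivity)

theorem elongationWeight_smul (p : ℝ) (w z : E) {c : ℝ} (hc : c ≠ 0) :
    elongationWeight p w (c • z) = elongationWeight p w z := by
  rw [elongationWeight, elongatedForm_smul, norm_smul, mul_pow, Real.norm_eq_abs, sq_abs,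
    mul_div_mul_left _ _ (pow_ne_zero 2 hc), elongationWeight]

theorem elongationWeight_map (p : ℝ) (T : E ≃ₗᵢ[ℝ] E) (w z : E) :
    elongationWeight p (T w) (T z) = elongationWeight p w z := by
  rw [elongationWeight, elongatedForm_map, LinearIsometryEquiv.norm_map, elongationWeight]

theorem norm_elongationWeight_le_one {p : ℝ} (hp : 0 ≤ p) (w z : E) :
    ‖elongationWeight p w z‖ ≤ 1 := by
  rw [Real.norm_of_nonneg (elongationWeight_nonneg p w z)]
  exact elongationWeight_le_one hp w z

variable [MeasurableSpace E] [BorelSpace E] [FiniteDimensional ℝ E]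

theorem measurable_elongationWeight (p : ℝ) :
    Measurable fun q : E × E => elongationWeight p q.1 q.2 := by
  unfold elongationWeight elongatedForm
  fun_prop

end ElongatedForm

section Annulus

/-- The closed annulus of radii `r` and `2 * r` centred at the origin. -/
def annulus (E : Type*) [Norm E] (r : ℝ) : Set E := norm ⁻¹' Set.Icc r (2 * r)

variable {E : Type*} [NormedAddCommGroup E]

theorem annulus_subset_closedBall (r : ℝ) : annulus E r ⊆ Metric.closedBall 0 (2 * r) :=
  fun _ hw => mem_closedBall_zero_iff.2 hw.2

variable [MeasurableSpace E] [BorelSpace E]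

theorem measurableSet_annulus (r : ℝ) : MeasurableSet (annulus E r) :=
  measurable_norm measurableSet_Icc

variable [InnerProductSpace ℝ E] [FiniteDimensional ℝ E]

theorem volume_annulus_lt_top (r : ℝ) : volume (annulus E r) < ⊤ :=
  (measure_mono (annulus_subset_closedBall r)).trans_lt measure_closedBall_lt_top

theorem volume_real_annulus_le {r : ℝ} (hr : 0 ≤ r) :
    volume.real (annulus E r) ≤
      r ^ Module.finrank ℝ E * volume.real (Metric.closedBall (0 : E) 2) := by
  refine (measureReal_mono (annulus_subset_closedBall r) measure_closedBall_lt_top.ne).trans_eq ?_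
  rw [Measure.addHaar_real_closedBall _ _ (by positivity),
    Measure.addHaar_real_closedBall _ _ zero_le_two, mul_pow]
  ring

theorem integrableOn_elongationWeight {p : ℝ} (hp : 0 ≤ p) (r : ℝ) (z : E) :
    IntegrableOn (fun w => elongationWeight p w z) (annulus E r) :=
  Measure.integrableOn_of_bounded (M := 1) (volume_annulus_lt_top r).ne
    ((measurable_elongationWeight p).comp measurable_prodMk_right).aestronglyMeasurable
    (Eventually.of_forall fun w => norm_elongationWeight_le_one hp w z)

theorem integral_annulus_elongationWeight_eq_of_norm_eq (p r : ℝ) {z z' : E} (h : ‖z‖ = ‖z'‖) :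
    ∫ w in annulus E r, elongationWeight p w z = ∫ w in annulus E r, elongationWeight p w z' := by
  let T : E ≃ₗᵢ[ℝ] E := (ℝ ∙ (z - z'))ᗮ.reflection
  have hT : T z = z' := Submodule.reflection_sub h
  have hannulus : T ⁻¹' annulus E r = annulus E r := by
    ext w; simp only [annulus, Set.mem_preimage, LinearIsometryEquiv.norm_map]
  calc ∫ w in annulus E r, elongationWeight p w z
      = ∫ w in T ⁻¹' annulus E r, elongationWeight p (T w) z' := by
        rw [hannulus, ← hT]; simp only [elongationWeight_map]
    _ = ∫ w in annulus E r, elongationWeight p w z' :=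
        T.measurePreserving.setIntegral_preimage_emb T.toHomeomorph.measurableEmbedding
          (fun w => elongationWeight p w z') (annulus E r)

theorem integral_annulus_elongationWeight_eq (p r : ℝ) {z z' : E} (hz : z ≠ 0) (hz' : z' ≠ 0) :
    ∫ w in annulus E r, elongationWeight p w z = ∫ w in annulus E r, elongationWeight p w z' := by
  have hz_norm : ‖z‖ ≠ 0 := norm_ne_zero_iff.2 hz
  have hz'_norm : ‖z'‖ ≠ 0 := norm_ne_zero_iff.2 hz'
  have hnorm : ‖(‖z'‖ / ‖z‖) • z‖ = ‖z'‖ := by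
    rw [norm_smul, norm_div, norm_norm, norm_norm, div_mul_cancel₀ _ hz_norm]
  rw [← integral_annulus_elongationWeight_eq_of_norm_eq p r hnorm]
  simp only [elongationWeight_smul p _ z (div_ne_zero hz'_norm hz_norm)]

theorem integrable_mul_elongationWeight {X : Type*} [MeasurableSpace X] {ρ : Measure X} [SFinite ρ]
    {k : X → ℝ} {T : X → E} {p : ℝ} (hp : 0 ≤ p) (hk : Integrable k ρ) (hT : Measurable T) (r : ℝ) :
    Integrable (fun q : E × X => k q.2 * elongationWeight p q.1 (T q.2))
      ((volume.restrict (annulus E r)).prod ρ) := by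
  have : IsFiniteMeasure (volume.restrict (annulus E r)) :=
    isFiniteMeasure_restrict.2 (volume_annulus_lt_top r).ne
  refine (hk.comp_snd _).mul_bdd (c := 1) ?_
    (Eventually.of_forall fun q => norm_elongationWeight_le_one hp _ _)
  exact ((measurable_elongationWeight p).comp
    (measurable_fst.prodMk (hT.comp measurable_snd))).aestronglyMeasurable

theorem integral_annulus_integral_mul_elongationWeight {X : Type*} [MeasurableSpace X]
    {ρ : Measure X} [SFinite ρ] {k : X → ℝ} {T : X → E} {p : ℝ} (hp : 0 ≤ p) (hk : Integrable k ρ)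
    (hT : Measurable T) (hkT : ∀ y, T y = 0 → k y = 0) (r : ℝ) {e : E} (he : e ≠ 0) :
    ∫ w in annulus E r, ∫ y, k y * elongationWeight p w (T y) ∂ρ =
      (∫ w in annulus E r, elongationWeight p w e) * ∫ y, k y ∂ρ := by
  rw [integral_integral_swap (integrable_mul_elongationWeight hp hk hT r), ← integral_const_mul]
  congr 1 with y
  rw [integral_const_mul, mul_comm]
  rcases eq_or_ne (T y) 0 with hy | hy
  · rw [hkT y hy, mul_zero, mul_zero]
  · rw [integral_annulus_elongationWeight_eq p r hy he]

end Annulus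

section Box

variable {ι : Type*} [Fintype ι] [DecidableEq ι]

theorem norm_sq_eq_sq_add_sum_erase (i : ι) (w : EuclideanSpace ℝ ι) :
    ‖w‖ ^ 2 = w i ^ 2 + ∑ j ∈ Finset.univ.erase i, w j ^ 2 := by
  rw [EuclideanSpace.real_norm_sq_eq,
    Finset.add_sum_erase Finset.univ (fun j => w j ^ 2) (Finset.mem_univ i)]

theorem elongatedForm_single (i : ι) (w : EuclideanSpace ℝ ι) :
    elongatedForm w (EuclideanSpace.single i 1) = 1 + ∑ j ∈ Finset.univ.erase i, w j ^ 2 := by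
  rw [elongatedForm, norm_sq_eq_sq_add_sum_erase i w, EuclideanSpace.inner_single_right,
    PiLp.norm_single, norm_one, conj_trivial]
  ring

variable {n : ℕ}

/-- A box of length `r / 2` in the direction `i` and of width `2 / n` in all the others. -/
def needleBox (i : Fin n) (r : ℝ) : Set (EuclideanSpace ℝ (Fin n)) :=
  WithLp.ofLp ⁻¹' Set.Icc (Function.update (fun _ => -(1 / n : ℝ)) i r)
    (Function.update (fun _ => (1 / n : ℝ)) i (3 / 2 * r))

theorem measurableSet_needleBox (i : Fin n) (r : ℝ) : MeasurableSet (needleBox i r) :=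
  measurableSet_Icc.preimage (PiLp.volume_preserving_ofLp (Fin n)).measurable

theorem volume_real_needleBox (i : Fin n) {r : ℝ} (hr : 0 ≤ r) :
    volume.real (needleBox i r) = 1 / 2 * (2 / n) ^ (n - 1) * r := by
  have hle : Function.update (fun _ => -(1 / n : ℝ)) i r ≤
      Function.update (fun _ => (1 / n : ℝ)) i (3 / 2 * r) := by
    refine update_le_update_iff.2 ⟨by linarith, fun _ _ => ?_⟩
    exact neg_le_self (by positivity)
  rw [Measure.real, needleBox, (PiLp.volume_preserving_ofLp (Fin n)).measure_preimage
    measurableSet_Icc.nullMeasurableSet, Real.volume_Icc_pi_toReal hle]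
  have hsides (j : Fin n) : Function.update (fun _ => (1 / n : ℝ)) i (3 / 2 * r) j -
      Function.update (fun _ => -(1 / n : ℝ)) i r j =
        Function.update (fun _ => (2 / n : ℝ)) i (1 / 2 * r) j := by
    rcases eq_or_ne j i with rfl | hj
    · simp only [Function.update_self]; ring
    · simp only [Function.update_of_ne hj]; ring
  simp only [hsides, Finset.prod_update_of_mem (Finset.mem_univ i), Finset.prod_const,
    Finset.card_univ_sdiff, Fintype.card_fin, Finset.card_singleton]
  ring

theorem sum_sq_erase_le_one_of_mem_needleBox {i : Fin n} {r : ℝ} {w : EuclideanSpace ℝ (Fin n)}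
    (hw : w ∈ needleBox i r) : ∑ j ∈ Finset.univ.erase i, w j ^ 2 ≤ 1 := by
  have hn : (1 : ℝ) ≤ n := by exact_mod_cast i.pos
  have hcoord (j : Fin n) (hj : j ∈ Finset.univ.erase i) : w j ^ 2 ≤ (1 / n : ℝ) ^ 2 := by
    have hji := Finset.ne_of_mem_erase hj
    have hlower := hw.1 j
    have hupper := hw.2 j
    rw [Function.update_of_ne hji] at hlower hupper
    exact sq_le_sq' hlower hupper
  calc ∑ j ∈ Finset.univ.erase i, w j ^ 2
      ≤ (Finset.univ.erase i).card • (1 / n : ℝ) ^ 2 := Finset.sum_le_card_nsmul _ _ _ hcoord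
    _ ≤ n • (1 / n : ℝ) ^ 2 := by
        gcongr
        exact (Finset.card_le_univ _).trans_eq (Fintype.card_fin n)
    _ = 1 / n := by rw [nsmul_eq_mul]; field_simp
    _ ≤ 1 := div_le_one_of_le₀ hn (by positivity)

theorem needleBox_subset_annulus (i : Fin n) {r : ℝ} (hr : 1 ≤ r) :
    needleBox i r ⊆ annulus (EuclideanSpace ℝ (Fin n)) r := by
  intro w hw
  have hlower : r ≤ w i := by simpa only [Function.update_self] using hw.1 i
  have hupper : w i ≤ 3 / 2 * r := by simpa only [Function.update_self] using hw.2 i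
  have hnorm := norm_sq_eq_sq_add_sum_erase i w
  have hsum := sum_sq_erase_le_one_of_mem_needleBox hw
  have hsum_nonneg : 0 ≤ ∑ j ∈ Finset.univ.erase i, w j ^ 2 :=
    Finset.sum_nonneg fun _ _ => sq_nonneg _
  exact ⟨le_of_sq_le_sq (by nlinarith) (norm_nonneg w), le_of_sq_le_sq (by nlinarith) (by linarith)⟩

theorem half_rpow_le_elongationWeight_of_mem_needleBox {p : ℝ} (hp : 0 ≤ p) {i : Fin n} {r : ℝ}
    {w : EuclideanSpace ℝ (Fin n)} (hw : w ∈ needleBox i r) :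
    (1 / 2 : ℝ) ^ (p / 2) ≤ elongationWeight p w (EuclideanSpace.single i 1) := by
  have hform : elongatedForm w (EuclideanSpace.single i 1) ≤ 2 := by
    rw [elongatedForm_single]
    linarith [sum_sq_erase_le_one_of_mem_needleBox hw]
  have hpos : 0 < elongatedForm w (EuclideanSpace.single i (1 : ℝ)) :=
    elongatedForm_pos w (by simp)
  rw [elongationWeight, PiLp.norm_single, norm_one, one_pow]
  gcongr

theorem le_integral_annulus_elongationWeight_single {p : ℝ} (hp : 0 ≤ p) (i : Fin n) {r : ℝ}
    (hr : 1 ≤ r) :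
    1 / 2 * (2 / n) ^ (n - 1) * (1 / 2 : ℝ) ^ (p / 2) * r ≤
      ∫ w in annulus (EuclideanSpace ℝ (Fin n)) r,
        elongationWeight p w (EuclideanSpace.single i 1) := by
  have hsub := needleBox_subset_annulus i hr
  have hint := integrableOn_elongationWeight hp r (EuclideanSpace.single i (1 : ℝ))
  calc 1 / 2 * (2 / n) ^ (n - 1) * (1 / 2 : ℝ) ^ (p / 2) * r
      = ∫ _ in needleBox i r, (1 / 2 : ℝ) ^ (p / 2) := by
        rw [setIntegral_const, volume_real_needleBox i (by linarith), smul_eq_mul]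
        ring
    _ ≤ ∫ w in needleBox i r, elongationWeight p w (EuclideanSpace.single i 1) :=
        setIntegral_mono_on
          (integrableOn_const ((measure_mono hsub).trans_lt (volume_annulus_lt_top r)).ne)
          (hint.mono_set hsub) (measurableSet_needleBox i r)
          fun _ hw => half_rpow_le_elongationWeight_of_mem_needleBox hp hw
    _ ≤ _ := setIntegral_mono_set hint
        (Eventually.of_forall fun w => elongationWeight_nonneg p w _) hsub.eventuallyLE

end Box

section Matrices

open scoped MatrixOrder Matrix

variable {ι : Type*} [Fintype ι] [DecidableEq ι]

theorem norm_sq_toEuclideanCLM {R : Matrix ι ι ℝ} (hR : R.IsHermitian) (y : EuclideanSpace ℝ ι) :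
    ‖Matrix.toEuclideanCLM (𝕜 := ℝ) R y‖ ^ 2 =
      inner ℝ y (Matrix.toEuclideanCLM (𝕜 := ℝ) (R * R) y) := by
  have hadj : (Matrix.toEuclideanCLM (𝕜 := ℝ) R).adjoint = Matrix.toEuclideanCLM (𝕜 := ℝ) R := by
    rw [← ContinuousLinearMap.star_eq_adjoint, ← map_star, Matrix.star_eq_conjTranspose, hR.eq]
  rw [map_mul, mul_apply_eq_comp, ← ContinuousLinearMap.adjoint_inner_left, hadj,
    real_inner_self_eq_norm_sq]

theorem exists_posDef_det_one_norm_inv_sq_eq {Q : Matrix ι ι ℝ} (hQ : Q.PosDef) [Nonempty ι] :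
    ∃ B : Matrix ι ι ℝ, B.PosDef ∧ B.det = 1 ∧ ∀ y : EuclideanSpace ℝ ι,
      inner ℝ y (Matrix.toEuclideanCLM (𝕜 := ℝ) Q y) =
        Q.det ^ (1 / Fintype.card ι : ℝ) * ‖Matrix.toEuclideanCLM (𝕜 := ℝ) B⁻¹ y‖ ^ 2 := by
  set c := Q.det ^ (1 / Fintype.card ι : ℝ) with hc
  have hc_pos : 0 < c := Real.rpow_pos_of_pos hQ.det_pos _
  have hM : (c⁻¹ • Q).PosDef := hQ.smul (inv_pos.2 hc_pos)
  have hM_det : (c⁻¹ • Q).det = 1 := by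
    rw [Matrix.det_smul, inv_pow, hc, one_div, Real.rpow_inv_natCast_pow hQ.det_pos.le
      Fintype.card_ne_zero, inv_mul_cancel₀ hQ.det_pos.ne']
  have hR : (CFC.sqrt (c⁻¹ • Q)).PosDef :=
    Matrix.isStrictlyPositive_iff_posDef.1 (hM.isStrictlyPositive.sqrt _)
  have hR_det : (CFC.sqrt (c⁻¹ • Q)).det = 1 := by
    rw [hM.posSemidef.det_sqrt, hM_det]; simp
  refine ⟨(CFC.sqrt (c⁻¹ • Q))⁻¹, hR.inv, ?_, fun y => ?_⟩
  · rw [Matrix.det_nonsing_inv, hR_det, Ring.inverse_one]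
  · rw [Matrix.nonsing_inv_nonsing_inv _ (hR_det ▸ isUnit_one),
      norm_sq_toEuclideanCLM hR.isHermitian, CFC.sqrt_mul_sqrt_self _ hM.posSemidef.nonneg,
      map_smul, smul_apply, real_inner_smul_right, mul_inv_cancel_left₀ (ne_of_gt hc_pos)]

/-- The matrix of the quadratic form `elongatedForm w`. -/
noncomputable def elongationMatrix (w : EuclideanSpace ℝ ι) : Matrix ι ι ℝ :=
  (1 + ‖w‖ ^ 2) • 1 - Matrix.vecMulVec w w

theorem inner_toEuclideanCLM_elongationMatrix (w z : EuclideanSpace ℝ ι) :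
    inner ℝ z (Matrix.toEuclideanCLM (𝕜 := ℝ) (elongationMatrix w) z) = elongatedForm w z := by
  have hrank_one : inner ℝ z (Matrix.toEuclideanCLM (𝕜 := ℝ) (Matrix.vecMulVec w.ofLp w.ofLp) z) =
      inner ℝ w z ^ 2 := by
    simp only [EuclideanSpace.inner_eq_star_dotProduct, Matrix.ofLp_toEuclideanCLM, star_trivial,
      Matrix.vecMulVec_mulVec, smul_dotProduct, MulOpposite.smul_eq_mul_unop, MulOpposite.unop_op,
      dotProduct_comm w.ofLp]
    ring
  rw [elongationMatrix, map_sub, map_smul, map_one, sub_apply, inner_sub_right,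
    hrank_one, smul_apply, one_apply_eq_self, real_inner_smul_right,
    real_inner_self_eq_norm_sq, elongatedForm]

theorem posDef_elongationMatrix (w : EuclideanSpace ℝ ι) : (elongationMatrix w).PosDef := by
  refine Matrix.PosDef.of_dotProduct_mulVec_pos ?_ fun z hz => ?_
  · ext i j
    simp [elongationMatrix, Matrix.vecMulVec_apply, Matrix.one_apply, eq_comm, mul_comm]
  · have hpos := elongatedForm_pos w (z := WithLp.toLp 2 z) (by simpa using hz)
    rw [← inner_toEuclideanCLM_elongationMatrix] at hpos
    simpa [EuclideanSpace.inner_eq_star_dotProduct, dotProduct_comm] using hpos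

theorem det_elongationMatrix [Nonempty ι] (w : EuclideanSpace ℝ ι) :
    (elongationMatrix w).det = (1 + ‖w‖ ^ 2) ^ (Fintype.card ι - 1) := by
  set c := 1 + ‖w‖ ^ 2 with hc
  have hc_ne : c ≠ 0 := by positivity
  have hfactor : elongationMatrix w =
      c • (1 + Matrix.replicateCol Unit (-(c⁻¹ • w.ofLp)) * Matrix.replicateRow Unit w.ofLp) := by
    rw [← Matrix.vecMulVec_eq, Matrix.neg_vecMulVec, Matrix.smul_vecMulVec, smul_add, smul_neg,
      smul_smul, mul_inv_cancel₀ hc_ne, one_smul, ← sub_eq_add_neg, elongationMatrix]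
  have hnorm : w.ofLp ⬝ᵥ w.ofLp = c - 1 := by
    rw [hc, EuclideanSpace.real_norm_sq_eq, dotProduct]; simp only [sq]; ring
  rw [hfactor, Matrix.det_smul, Matrix.det_one_add_replicateCol_mul_replicateRow, dotProduct_neg,
    dotProduct_smul, hnorm, smul_eq_mul, ← mul_pow_sub_one Fintype.card_ne_zero]
  field_simp
  ring

theorem exists_posDef_det_one_elongatedForm_eq [Nonempty ι] {A : Matrix ι ι ℝ} (hA : A.PosDef)
    (hA_det : A.det = 1) (w : EuclideanSpace ℝ ι) :
    ∃ B : Matrix ι ι ℝ, B.PosDef ∧ B.det = 1 ∧ ∀ y : EuclideanSpace ℝ ι,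
      elongatedForm w (Matrix.toEuclideanCLM (𝕜 := ℝ) A⁻¹ y) =
        (1 + ‖w‖ ^ 2) ^ ((Fintype.card ι - 1) / Fintype.card ι : ℝ) *
          ‖Matrix.toEuclideanCLM (𝕜 := ℝ) B⁻¹ y‖ ^ 2 := by
  have hA_herm : A⁻¹ᴴ = A⁻¹ := hA.inv.isHermitian.eq
  have hQ : (A⁻¹ᴴ * elongationMatrix w * A⁻¹).PosDef :=
    (posDef_elongationMatrix w).conjTranspose_mul_mul_same
      (Matrix.mulVec_injective_of_isUnit hA.inv.isUnit)
  have hQ_det : (A⁻¹ᴴ * elongationMatrix w * A⁻¹).det = (1 + ‖w‖ ^ 2) ^ (Fintype.card ι - 1) := by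
    rw [hA_herm, Matrix.det_mul, Matrix.det_mul, Matrix.det_nonsing_inv, hA_det, Ring.inverse_one,
      one_mul, mul_one, det_elongationMatrix]
  obtain ⟨B, hB, hB_det, hB_eq⟩ := exists_posDef_det_one_norm_inv_sq_eq hQ
  refine ⟨B, hB, hB_det, fun y => ?_⟩
  have hexp : ((1 + ‖w‖ ^ 2) ^ (Fintype.card ι - 1)) ^ (1 / Fintype.card ι : ℝ) =
      (1 + ‖w‖ ^ 2) ^ ((Fintype.card ι - 1) / Fintype.card ι : ℝ) := by
    rw [← Real.rpow_natCast, ← Real.rpow_mul (by positivity), Nat.cast_pred Fintype.card_pos,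
      mul_one_div]
  rw [← hexp, ← hQ_det, ← hB_eq, ← inner_toEuclideanCLM_elongationMatrix, map_mul, map_mul,
    ← Matrix.star_eq_conjTranspose, map_star, ContinuousLinearMap.star_eq_adjoint,
    mul_apply_eq_comp, mul_apply_eq_comp,
    ContinuousLinearMap.adjoint_inner_right]

end Matrices

section FractionalOperator

variable {n : ℕ} {s : ℝ} {A : Matrix (Fin n) (Fin n) ℝ} {v : EuclideanSpace ℝ (Fin n) → ℝ}
  {x y : EuclideanSpace ℝ (Fin n)}

theorem kernelA_eq_div_norm_toEuclideanCLM (s : ℝ) (A : Matrix (Fin n) (Fin n) ℝ)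
    (v : EuclideanSpace ℝ (Fin n) → ℝ) (x y : EuclideanSpace ℝ (Fin n)) :
    kernelA s A v x y =
      delta2 v x y / ‖Matrix.toEuclideanCLM (𝕜 := ℝ) A⁻¹ y‖ ^ ((n : ℝ) + 2 * s) :=
  rfl

theorem kernelA_eq_zero (hs : 0 < s) (hy : Matrix.toEuclideanCLM (𝕜 := ℝ) A⁻¹ y = 0) :
    kernelA s A v x y = 0 := by
  rw [kernelA_eq_div_norm_toEuclideanCLM, hy, norm_zero, Real.zero_rpow (by positivity), div_zero]

theorem exists_kernelA_mul_elongationWeight_eq [NeZero n] (hs : 0 < s) (hA : A.PosDef)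
    (hA_det : A.det = 1) (w : EuclideanSpace ℝ (Fin n)) :
    ∃ B : Matrix (Fin n) (Fin n) ℝ, B.PosDef ∧ B.det = 1 ∧ ∀ v x y,
      kernelA s A v x y *
          elongationWeight (n + 2 * s) w (Matrix.toEuclideanCLM (𝕜 := ℝ) A⁻¹ y) =
        (1 + ‖w‖ ^ 2) ^ (-((n - 1) / n * ((n + 2 * s) / 2)) : ℝ) * kernelA s B v x y := by
  obtain ⟨B, hB, hB_det, hform⟩ := exists_posDef_det_one_elongatedForm_eq hA hA_det w
  refine ⟨B, hB, hB_det, fun v x y => ?_⟩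
  have hform_y := hform y
  rw [Fintype.card_fin] at hform_y
  have hbase : 0 < 1 + ‖w‖ ^ 2 := by positivity
  rcases eq_or_ne (Matrix.toEuclideanCLM (𝕜 := ℝ) A⁻¹ y) 0 with hAy | hAy
  · have hBy : Matrix.toEuclideanCLM (𝕜 := ℝ) B⁻¹ y = 0 := by
      simpa [hAy, elongatedForm, (Real.rpow_pos_of_pos hbase _).ne'] using hform_y.symm
    rw [kernelA_eq_zero hs hAy, kernelA_eq_zero hs hBy, zero_mul, mul_zero]
  · have hnorm_pow (z : EuclideanSpace ℝ (Fin n)) :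
        (‖z‖ ^ 2) ^ ((n + 2 * s) / 2) = ‖z‖ ^ (n + 2 * s) := by
      rw [← Real.rpow_natCast_mul (norm_nonneg z)]; congr 1; push_cast; ring
    have hAy_pow : 0 < ‖Matrix.toEuclideanCLM (𝕜 := ℝ) A⁻¹ y‖ ^ (n + 2 * s) :=
      Real.rpow_pos_of_pos (norm_pos_iff.2 hAy) _
    rw [elongationWeight, hform_y, Real.div_rpow (by positivity) (by positivity),
      Real.mul_rpow (by positivity) (by positivity), hnorm_pow, hnorm_pow,
      ← Real.rpow_mul hbase.le, Real.rpow_neg hbase.le, kernelA_eq_div_norm_toEuclideanCLM,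
      kernelA_eq_div_norm_toEuclideanCLM]
    field_simp [ne_of_gt hAy_pow]

/-- The values at `x` of the operators `L_A` over all admissible `A`, i.e. positive definite with
`det A = 1`; their infimum is `D_s v(x)`. -/
def LAValues (s : ℝ) (v : EuclideanSpace ℝ (Fin n) → ℝ) (x : EuclideanSpace ℝ (Fin n)) : Set ℝ :=
  {z | ∃ A : Matrix (Fin n) (Fin n) ℝ, A.PosDef ∧ A.det = 1 ∧ z = LA s A v x}

theorem neg_mul_rpow_le_integral_kernelA_mul_elongationWeight [NeZero n] (hs : 0 < s)
    (hA : A.PosDef) (hA_det : A.det = 1) {C : ℝ} (hC : 0 ≤ C)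
    (hbdd : -C ∈ lowerBounds (LAValues s v x))
    {r : ℝ} (hr : 0 < r) {w : EuclideanSpace ℝ (Fin n)} (hw : r ≤ ‖w‖) :
    -(2 * C * r ^ (-((n - 1) / n * (n + 2 * s)) : ℝ)) ≤
      ∫ y, kernelA s A v x y *
        elongationWeight (n + 2 * s) w (Matrix.toEuclideanCLM (𝕜 := ℝ) A⁻¹ y) := by
  obtain ⟨B, hB, hB_det, hker⟩ := exists_kernelA_mul_elongationWeight_eq hs hA hA_det w
  set c := (1 + ‖w‖ ^ 2) ^ (-((n - 1) / n * ((n + 2 * s) / 2)) : ℝ)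
  have hc_nonneg : 0 ≤ c := by positivity
  have hc_le : c ≤ r ^ (-((n - 1) / n * (n + 2 * s)) : ℝ) := by
    have hn : (1 : ℝ) ≤ n := by exact_mod_cast NeZero.one_le
    calc c ≤ (r ^ 2) ^ (-((n - 1) / n * ((n + 2 * s) / 2)) : ℝ) := by
          refine Real.rpow_le_rpow_of_nonpos (by positivity) (by nlinarith) (neg_nonpos.2 ?_)
          exact mul_nonneg (div_nonneg (by linarith) (by positivity)) (by positivity)
      _ = r ^ (-((n - 1) / n * (n + 2 * s)) : ℝ) := by
          rw [← Real.rpow_natCast_mul hr.le]; congr 1; push_cast; ring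
  calc -(2 * C * r ^ (-((n - 1) / n * (n + 2 * s)) : ℝ)) ≤ -(2 * C * c) := by gcongr
    _ = c * (2 * -C) := by ring
    _ ≤ c * (2 * LA s B v x) :=
        mul_le_mul_of_nonneg_left (by linarith [hbdd ⟨B, hB, hB_det, rfl⟩]) hc_nonneg
    _ = ∫ y, kernelA s A v x y *
          elongationWeight (n + 2 * s) w (Matrix.toEuclideanCLM (𝕜 := ℝ) A⁻¹ y) := by
        simp only [hker, integral_const_mul, LA]; ring

theorem neg_volume_annulus_mul_le_integral_elongationWeight_mul_LA [NeZero n] (hs : 0 < s)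
    (hA : A.PosDef) (hA_det : A.det = 1) (hint : Integrable (kernelA s A v x)) {C : ℝ}
    (hC : 0 ≤ C) (hbdd : -C ∈ lowerBounds (LAValues s v x)) {r : ℝ} (hr : 0 < r)
    {e : EuclideanSpace ℝ (Fin n)} (he : e ≠ 0) :
    -(volume.real (annulus (EuclideanSpace ℝ (Fin n)) r) *
        (C * r ^ (-((n - 1) / n * (n + 2 * s)) : ℝ))) ≤
      (∫ w in annulus (EuclideanSpace ℝ (Fin n)) r, elongationWeight (n + 2 * s) w e) *
        LA s A v x := by
  have hp : 0 ≤ n + 2 * s := by positivity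
  have hT : Measurable (Matrix.toEuclideanCLM (𝕜 := ℝ) A⁻¹) :=
    (Matrix.toEuclideanCLM (𝕜 := ℝ) A⁻¹).continuous.measurable
  set b := 2 * C * r ^ (-((n - 1) / n * (n + 2 * s)) : ℝ)
  have havg : -(volume.real (annulus (EuclideanSpace ℝ (Fin n)) r) * b) ≤
      (∫ w in annulus (EuclideanSpace ℝ (Fin n)) r, elongationWeight (n + 2 * s) w e) *
        ∫ y, kernelA s A v x y := by
    rw [← integral_annulus_integral_mul_elongationWeight hp hint hT
      (fun _ => kernelA_eq_zero hs) r he]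
    calc -(volume.real (annulus (EuclideanSpace ℝ (Fin n)) r) * b)
        = ∫ _ in annulus (EuclideanSpace ℝ (Fin n)) r, -b := by
          rw [setIntegral_const, smul_eq_mul, mul_neg]
      _ ≤ _ := setIntegral_mono_on (integrableOn_const (volume_annulus_lt_top r).ne)
          (integrable_mul_elongationWeight hp hint hT r).integral_prod_left
          (measurableSet_annulus r) fun w hw =>
            neg_mul_rpow_le_integral_kernelA_mul_elongationWeight hs hA hA_det hC hbdd hr hw.1
  rw [LA]
  linarith

theorem volume_real_annulus_mul_rpow_le [NeZero n] (s : ℝ) {r : ℝ} (hr : 0 < r) :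
    volume.real (annulus (EuclideanSpace ℝ (Fin n)) r) *
        r ^ (-((n - 1) / n * (n + 2 * s)) : ℝ) ≤
      volume.real (Metric.closedBall (0 : EuclideanSpace ℝ (Fin n)) 2) *
        (r * r ^ (-(2 * s * ((n - 1) / n)) : ℝ)) := by
  have hexp : r ^ n * r ^ (-((n - 1) / n * (n + 2 * s)) : ℝ) =
      r * r ^ (-(2 * s * ((n - 1) / n)) : ℝ) := by
    nth_rw 3 [← Real.rpow_one r]
    rw [← Real.rpow_natCast, ← Real.rpow_add hr, ← Real.rpow_add hr]
    congr 1
    field_simp [NeZero.ne n]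
    ring
  rw [← hexp, ← mul_assoc, mul_comm _ (r ^ n)]
  gcongr
  simpa only [finrank_euclideanSpace_fin] using
    volume_real_annulus_le (E := EuclideanSpace ℝ (Fin n)) hr.le

theorem neg_mul_rpow_le_mul_LA_of_nonpos [NeZero n] (hs : 0 < s) (hA : A.PosDef)
    (hA_det : A.det = 1) (hint : Integrable (kernelA s A v x)) {C : ℝ} (hC : 0 ≤ C)
    (hbdd : -C ∈ lowerBounds (LAValues s v x)) (hLA : LA s A v x ≤ 0) {r : ℝ} (hr : 1 ≤ r) :
    -(C * volume.real (Metric.closedBall (0 : EuclideanSpace ℝ (Fin n)) 2) *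
        r ^ (-(2 * s * ((n - 1) / n)) : ℝ)) ≤
      1 / 2 * (2 / n) ^ (n - 1) * (1 / 2 : ℝ) ^ ((n + 2 * s) / 2) * LA s A v x := by
  have hr_pos : 0 < r := by positivity
  set κ := 1 / 2 * (2 / n) ^ (n - 1) * (1 / 2 : ℝ) ^ ((n + 2 * s) / 2)
  set V := volume.real (Metric.closedBall (0 : EuclideanSpace ℝ (Fin n)) 2)
  have hneedle : κ * r ≤ ∫ w in annulus (EuclideanSpace ℝ (Fin n)) r,
      elongationWeight (n + 2 * s) w (EuclideanSpace.single 0 1) :=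
    le_integral_annulus_elongationWeight_single (by positivity) 0 hr
  refine le_of_mul_le_mul_left ?_ hr_pos
  calc r * -(C * V * r ^ (-(2 * s * ((n - 1) / n)) : ℝ))
      = -(C * (V * (r * r ^ (-(2 * s * ((n - 1) / n)) : ℝ)))) := by ring
    _ ≤ -(C * (volume.real (annulus (EuclideanSpace ℝ (Fin n)) r) *
          r ^ (-((n - 1) / n * (n + 2 * s)) : ℝ))) := by
        gcongr -(_ * ?_)
        exact volume_real_annulus_mul_rpow_le s hr_pos
    _ = -(volume.real (annulus (EuclideanSpace ℝ (Fin n)) r) *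
          (C * r ^ (-((n - 1) / n * (n + 2 * s)) : ℝ))) := by rw [mul_left_comm]
    _ ≤ _ := neg_volume_annulus_mul_le_integral_elongationWeight_mul_LA hs hA hA_det hint
        hC hbdd hr_pos (by simp)
    _ ≤ κ * r * LA s A v x := mul_le_mul_of_nonpos_right hneedle hLA
    _ = r * (κ * LA s A v x) := by ring

theorem LA_nonneg_of_bddBelow (hn : 2 ≤ n) (hs : 0 < s) (hA : A.PosDef) (hA_det : A.det = 1)
    (hint : Integrable (kernelA s A v x)) (hbdd : BddBelow (LAValues s v x)) :
    0 ≤ LA s A v x := by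
  have : NeZero n := ⟨by lia⟩
  by_contra! hneg
  obtain ⟨m, hm⟩ := hbdd
  have hbound : -|m| ∈ lowerBounds (LAValues s v x) := fun z hz => (neg_abs_le m).trans (hm hz)
  have hε : 0 < 2 * s * ((n - 1) / n) := by
    have : (2 : ℝ) ≤ n := by exact_mod_cast hn
    exact mul_pos (by positivity) (div_pos (by linarith) (by positivity))
  have hlim : Tendsto (fun r : ℝ => -(|m| *
      volume.real (Metric.closedBall (0 : EuclideanSpace ℝ (Fin n)) 2) *
        r ^ (-(2 * s * ((n - 1) / n)) : ℝ))) atTop (nhds 0) := by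
    simpa using ((tendsto_rpow_neg_atTop hε).const_mul _).neg
  have hnonneg : 0 ≤ 1 / 2 * (2 / n) ^ (n - 1) * (1 / 2 : ℝ) ^ ((n + 2 * s) / 2) * LA s A v x :=
    le_of_tendsto hlim ((eventually_ge_atTop 1).mono fun r hr =>
      neg_mul_rpow_le_mul_LA_of_nonpos hs hA hA_det hint (abs_nonneg m) hbound hneg.le hr)
  exact (mul_neg_of_pos_of_neg (by positivity) hneg).not_ge hnonneg

theorem LA_mono (hδ : ∀ z, delta2 v x z ≤ delta2 v y z) (hx : Integrable (kernelA s A v x))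
    (hy : Integrable (kernelA s A v y)) : LA s A v x ≤ LA s A v y := by
  refine mul_le_mul_of_nonneg_left (integral_mono hx hy fun z => ?_) (by norm_num)
  exact div_le_div_of_nonneg_right (hδ z) (by positivity)

theorem LAValues_nonempty (s : ℝ) (v : EuclideanSpace ℝ (Fin n) → ℝ)
    (x : EuclideanSpace ℝ (Fin n)) : (LAValues s v x).Nonempty :=
  ⟨_, 1, Matrix.PosDef.one, Matrix.det_one, rfl⟩

theorem bddBelow_LAValues_of_le_one (hn : n ≤ 1) (s : ℝ) (v : EuclideanSpace ℝ (Fin n) → ℝ)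
    (x : EuclideanSpace ℝ (Fin n)) : BddBelow (LAValues s v x) := by
  have : Subsingleton (Fin n) := Fin.subsingleton_iff_le_one.2 hn
  refine ⟨LA s 1 v x, ?_⟩
  rintro _ ⟨A, -, hA_det, rfl⟩
  have hA : A = 1 := by
    ext i j
    rw [Subsingleton.elim j i, ← Matrix.det_eq_elem_of_subsingleton A i, hA_det,
      Matrix.one_apply_eq]
  rw [hA]

theorem sInf_LAValues_le_of_delta2_le (hs : 0 < s) (hδ : ∀ z, delta2 v x z ≤ delta2 v y z)
    (hx : ∀ A : Matrix (Fin n) (Fin n) ℝ, A.PosDef → A.det = 1 → Integrable (kernelA s A v x))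
    (hy : ∀ A : Matrix (Fin n) (Fin n) ℝ, A.PosDef → A.det = 1 → Integrable (kernelA s A v y)) :
    sInf (LAValues s v x) ≤ sInf (LAValues s v y) := by
  by_cases hbdd : BddBelow (LAValues s v x)
  · refine le_csInf (LAValues_nonempty s v y) ?_
    rintro _ ⟨A, hA, hA_det, rfl⟩
    exact (csInf_le hbdd ⟨A, hA, hA_det, rfl⟩).trans
      (LA_mono hδ (hx A hA hA_det) (hy A hA hA_det))
  -- `sInf` of a set of reals that is unbounded below is `0`, hence the need for `0 ≤ L_A v(y)`.
  · have hn : 2 ≤ n := by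
      contrapose! hbdd
      exact bddBelow_LAValues_of_le_one (by lia) s v x
    rw [Real.sInf_of_not_bddBelow hbdd]
    by_cases hbdd_y : BddBelow (LAValues s v y)
    · refine Real.sInf_nonneg ?_
      rintro _ ⟨A, hA, hA_det, rfl⟩
      exact LA_nonneg_of_bddBelow hn hs hA hA_det (hy A hA hA_det) hbdd_y
    · rw [Real.sInf_of_not_bddBelow hbdd_y]

end FractionalOperator

theorem stmt16_general (n : ℕ) (s μ Lg Lφ : ℝ) (hs : 0 < s) (hμ : 0 < μ)
    (g : EuclideanSpace ℝ (Fin n) × ℝ → ℝ)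
    (hgLip : ∀ (x y : EuclideanSpace ℝ (Fin n)) (t : ℝ), |g (x, t) - g (y, t)| ≤ Lg * ‖x - y‖)
    (hgmono : ∀ (x : EuclideanSpace ℝ (Fin n)) (t₁ t₂ : ℝ), t₂ ≤ t₁ →
      μ * (t₁ - t₂) ≤ g (x, t₁) - g (x, t₂))
    (φ : EuclideanSpace ℝ (Fin n) → ℝ)
    (hφLip : ∀ a b : EuclideanSpace ℝ (Fin n), |φ a - φ b| ≤ Lφ * ‖a - b‖)
    (v : EuclideanSpace ℝ (Fin n) → ℝ) (hv : Continuous v)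
    (hintv : ∀ (x : EuclideanSpace ℝ (Fin n)) (A : Matrix (Fin n) (Fin n) ℝ),
      A.PosDef → A.det = 1 → Integrable (fun y => kernelA s A v x y))
    (heq : ∀ x : EuclideanSpace ℝ (Fin n), sInf (LAValues s v x) = g (x, v x))
    (hlim : Tendsto (fun x => v x - φ x) (cocompact (EuclideanSpace ℝ (Fin n))) (nhds 0))
    (x y : EuclideanSpace ℝ (Fin n)) : |v x - v y| ≤ max (Lg / μ) Lφ * ‖x - y‖ := by
  have hcomp (x y : EuclideanSpace ℝ (Fin n)) (hδ : ∀ z, delta2 v x z ≤ delta2 v y z) :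
      g (x, v x) ≤ g (y, v y) := by
    rw [← heq x, ← heq y]
    exact sInf_LAValues_le_of_delta2_le hs hδ (hintv x) (hintv y)
  exact abs_sub_le_max_mul_norm_of_comparison hμ (fun x y t => (le_abs_self _).trans (hgLip x y t))
    hgmono hcomp hv (fun a b => (le_abs_self _).trans (hφLip a b)) hlim x y

theorem stmt16 (n : ℕ) (hn : 1 ≤ n) (s μ Lg Lφ : ℝ) (hs : 1 / 2 < s) (hs1 : s < 1) (hμ : 0 < μ)
    (g : EuclideanSpace ℝ (Fin n) × ℝ → ℝ)
    (hgLip : ∀ (x y : EuclideanSpace ℝ (Fin n)) (t : ℝ), |g (x, t) - g (y, t)| ≤ Lg * ‖x - y‖)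
    (hgmono : ∀ (x : EuclideanSpace ℝ (Fin n)) (t₁ t₂ : ℝ), t₂ ≤ t₁ →
      μ * (t₁ - t₂) ≤ g (x, t₁) - g (x, t₂))
    (φ : EuclideanSpace ℝ (Fin n) → ℝ)
    (hφLip : ∀ a b : EuclideanSpace ℝ (Fin n), |φ a - φ b| ≤ Lφ * ‖a - b‖)
    (v : EuclideanSpace ℝ (Fin n) → ℝ) (hv : Continuous v)
    (hintv : ∀ (x : EuclideanSpace ℝ (Fin n)) (A : Matrix (Fin n) (Fin n) ℝ),
      A.PosDef → A.det = 1 → Integrable (fun y => kernelA s A v x y))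
    (heq : ∀ x : EuclideanSpace ℝ (Fin n),
      sInf {z : ℝ | ∃ A : Matrix (Fin n) (Fin n) ℝ, A.PosDef ∧ A.det = 1 ∧ z = LA s A v x} =
        g (x, v x))
    (hlim : Tendsto (fun x => v x - φ x) (cocompact (EuclideanSpace ℝ (Fin n))) (nhds 0)) :
    ∀ x y : EuclideanSpace ℝ (Fin n), |v x - v y| ≤ max (Lg / μ) Lφ * ‖x - y‖ := by
  exact stmt16_general n s μ Lg Lφ (one_half_pos.trans hs) hμ g hgLip hgmono φ hφLip v hv
    hintv heq hlim
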